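/- arXiv:math/0509470 — 4 statements merged into one kernel-verified Lean document; each statement's English description precedes it below -/
import Mathlib

section
/- If A and B are multisets of prime numbers such that the product of the factorials of the elements of A (with multiplicity) equals the product of the factorials of the elements of B, then A = B. In particular, any two distinct partitions of the same natural number into prime parts yield different multinomial coefficients. -/
/-- The product, with multiplicity, of the factorials of the elements of a multiset. -/
def factorialProd (A : Multiset ℕ) : ℕ := (A.map Nat.factorial).prod

/-!
A prime `p` divides `∏ q!` exactly when some factor has `p ≤ q`, so of two multisets of primes with
the same product of factorials each is cofinal for the other, and the largest element of one of
them, if there is any, lies in both. After the common part of the two multisets is cancelled nothing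
is shared, hence nothing is left.
-/

theorem inter_nonempty_of_isCofinalFor {α : Type*} [PartialOrder α] {s t : Set α}
    (hfin : s.Finite) (hne : s.Nonempty) (hst : IsCofinalFor s t) (hts : IsCofinalFor t s) :
    (s ∩ t).Nonempty := by
  obtain ⟨m, hm⟩ := hfin.exists_maximal hne
  obtain ⟨b, hbt, hmb⟩ := hst hm.prop
  obtain ⟨a, has, hba⟩ := hts hbt
  have hbm : b = m := le_antisymm (hba.trans (hm.le_of_ge has (hmb.trans hba))) hmb
  exact ⟨m, hm.prop, hbm ▸ hbt⟩

theorem disjoint_multiset_sub_sub {α : Type*} [DecidableEq α] (s t : Multiset α) :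
    Disjoint (s - t) (t - s) := by
  refine Multiset.disjoint_left.2 fun ha hb => ?_
  rw [Multiset.mem_sub] at ha hb
  exact ha.asymm hb

section FactorialProd

variable {A B : Multiset ℕ}

theorem factorialProd_ne_zero (A : Multiset ℕ) : factorialProd A ≠ 0 :=
  Multiset.prod_ne_zero <| by simp [Nat.factorial_ne_zero]

theorem factorialProd_add (A B : Multiset ℕ) :
    factorialProd (A + B) = factorialProd A * factorialProd B := by
  simp [factorialProd]

theorem factorialProd_sub_mul_factorialProd_inter (A B : Multiset ℕ) :
    factorialProd (A - B) * factorialProd (A ∩ B) = factorialProd A := by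
  rw [← factorialProd_add, Multiset.sub_add_inter]

theorem factorialProd_sub_comm_of_eq (h : factorialProd A = factorialProd B) :
    factorialProd (A - B) = factorialProd (B - A) := by
  refine mul_right_cancel₀ (factorialProd_ne_zero (A ∩ B)) ?_
  calc factorialProd (A - B) * factorialProd (A ∩ B)
      = factorialProd A := factorialProd_sub_mul_factorialProd_inter A B
    _ = factorialProd B := h
    _ = factorialProd (B - A) * factorialProd (A ∩ B) := by
      rw [Multiset.inter_comm, factorialProd_sub_mul_factorialProd_inter]

theorem factorial_dvd_factorialProd {n : ℕ} (hn : n ∈ A) : n.factorial ∣ factorialProd A :=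
  Multiset.dvd_prod (Multiset.mem_map_of_mem _ hn)

theorem prime_dvd_factorialProd_iff {p : ℕ} (hp : p.Prime) :
    p ∣ factorialProd A ↔ ∃ n ∈ A, p ≤ n := by
  constructor
  · intro h
    obtain ⟨n, hn, hpn⟩ := hp.prime.exists_mem_multiset_map_dvd h
    exact ⟨n, hn, hp.dvd_factorial.1 hpn⟩
  · rintro ⟨n, hn, hpn⟩
    exact (hp.dvd_factorial.2 hpn).trans (factorial_dvd_factorialProd hn)

theorem isCofinalFor_of_factorialProd_dvd (hA : ∀ p ∈ A, p.Prime)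
    (h : factorialProd A ∣ factorialProd B) : IsCofinalFor {p | p ∈ A} {n | n ∈ B} := by
  intro p hp
  have hpA : p ∣ factorialProd A := (prime_dvd_factorialProd_iff (hA p hp)).2 ⟨p, hp, le_rfl⟩
  exact (prime_dvd_factorialProd_iff (hA p hp)).1 (hpA.trans h)

theorem eq_zero_of_disjoint_of_factorialProd_eq (hA : ∀ p ∈ A, p.Prime) (hB : ∀ p ∈ B, p.Prime)
    (hAB : Disjoint A B) (h : factorialProd A = factorialProd B) : A = 0 := by
  by_contra hne
  obtain ⟨p, hpA, hpB⟩ := inter_nonempty_of_isCofinalFor (Multiset.finite_toSet A)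
    (Multiset.exists_mem_of_ne_zero hne) (isCofinalFor_of_factorialProd_dvd hA h.dvd)
    (isCofinalFor_of_factorialProd_dvd hB h.symm.dvd)
  exact Multiset.disjoint_left.1 hAB hpA hpB

theorem le_of_factorialProd_eq (hA : ∀ p ∈ A, p.Prime) (hB : ∀ p ∈ B, p.Prime)
    (h : factorialProd A = factorialProd B) : A ≤ B :=
  tsub_eq_zero_iff_le.1 <| eq_zero_of_disjoint_of_factorialProd_eq
    (fun p hp => hA p (Multiset.mem_of_le tsub_le_self hp))
    (fun p hp => hB p (Multiset.mem_of_le tsub_le_self hp))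
    (disjoint_multiset_sub_sub A B) (factorialProd_sub_comm_of_eq h)

theorem factorialProd_injOn_primes : Set.InjOn factorialProd {A | ∀ p ∈ A, p.Prime} :=
  fun _ hA _ hB h => le_antisymm (le_of_factorialProd_eq hA hB h)
    (le_of_factorialProd_eq hB hA h.symm)

end FactorialProd

/-- If `A` and `B` are multisets of primes with equal products of factorials, then `A = B`.
In particular, any two distinct partitions of the same natural number `n` into prime parts
yield different multinomial coefficients. -/
theorem factorialProd_primes_inj :
    (∀ A B : Multiset ℕ, (∀ q ∈ A, Nat.Prime q) → (∀ q ∈ B, Nat.Prime q) →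
      factorialProd A = factorialProd B → A = B) ∧
    (∀ (n : ℕ) (P Q : Nat.Partition n), (∀ j ∈ P.parts, Nat.Prime j) →
      (∀ j ∈ Q.parts, Nat.Prime j) → P ≠ Q →
      factorialProd P.parts ≠ factorialProd Q.parts) := by
  constructor
  · intro A B hA hB h
    exact factorialProd_injOn_primes hA hB h
  · intro n P Q hP hQ hne h
    exact hne (Nat.Partition.ext (factorialProd_injOn_primes hP hQ h))
end

section
/- The sequence of real numbers p(n−7)/p(n) tends to 1 as n tends to infinity. -/
/-- `numPartitions n`: the number of partitions of `n`. -/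
noncomputable def numPartitions (n : ℕ) : ℕ := Fintype.card (Nat.Partition n)

/-!
The partitions of `n + 1` containing a part `1` correspond to the partitions of `n`, so
`p(n + 1) - p(n)` counts the partitions of `n + 1` without the part `1`. Following Bateman and
Erdős, replace one part `a` of such a partition of `n` by `a` ones: the result determines `a` and
the original partition, so a partition without ones and with `d` distinct part sizes produces `d`
partitions of `n`, and no partition of `n` is produced twice. Apart from the polynomially many
partitions with at most `K` distinct part sizes, those without ones therefore make up at most
`1 / K` of all partitions. As `p(n)` grows faster than every polynomial, it follows that
`p(n + 1) - p(n) = o(p(n + 1))`, that is, `p(n) ~ p(n + 1)`.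
-/

open Filter Finset Asymptotics
open scoped Pointwise
open Nat.Partition (restricted)

theorem numPartitions_pos (n : ℕ) : 0 < numPartitions n := Fintype.card_pos

theorem mem_restricted_ne {n a : ℕ} {l : n.Partition} :
    l ∈ restricted n (· ≠ a) ↔ a ∉ l.parts := by
  simp only [restricted, mem_filter_univ]
  exact ⟨fun h ha => h a ha rfl, fun h i hi => ne_of_mem_of_not_mem hi h⟩

theorem numPartitions_add {a : ℕ} (ha : 1 ≤ a) (n : ℕ) :
    numPartitions (n + a) = numPartitions n + #(restricted (n + a) (· ≠ a)) := by
  have card_with_part : #{l : (n + a).Partition | a ∈ l.parts} = numPartitions n := by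
    rw [← Fintype.card_subtype,
      Fintype.card_congr (Nat.Partition.partitionWithPartEquiv ha (Nat.le_add_left a n)),
      Nat.add_sub_cancel, numPartitions]
  have filter_without_part :
      ({l : (n + a).Partition | a ∉ l.parts} : Finset _) = restricted (n + a) (· ≠ a) := by
    ext l
    rw [mem_filter_univ, mem_restricted_ne]
  rw [← card_with_part, ← filter_without_part, card_filter_add_card_filter_not, card_univ,
    numPartitions]

theorem exists_partition_filter_one_lt_eq {n : ℕ} {m : Multiset ℕ} (hsum : m.sum ≤ n)
    (hm : ∀ a ∈ m, 1 < a) : ∃ l : n.Partition, l.parts.filter (1 < ·) = m := by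
  refine ⟨⟨m + Multiset.replicate (n - m.sum) 1, fun {i} hi => ?_, ?_⟩, ?_⟩
  · rcases Multiset.mem_add.mp hi with him | hi_one
    · exact zero_lt_one.trans (hm i him)
    · exact (Multiset.eq_of_mem_replicate hi_one).symm ▸ zero_lt_one
  · rw [Multiset.sum_add, Multiset.sum_replicate, smul_eq_mul, mul_one,
      Nat.add_sub_cancel' hsum]
  · rw [Multiset.filter_add, Multiset.filter_eq_self.mpr hm, Multiset.filter_eq_nil.mpr,
      add_zero]
    exact fun i hi => (Multiset.eq_of_mem_replicate hi).not_gt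

theorem card_le_numPartitions {ι : Type*} {n : ℕ} {s : Finset ι} {f : ι → Multiset ℕ}
    (hsum : ∀ i ∈ s, (f i).sum ≤ n) (hf : ∀ i ∈ s, ∀ a ∈ f i, 1 < a) (hinj : Set.InjOn f s) :
    #s ≤ numPartitions n := by
  classical
  have image_subset :
      s.image f ⊆ univ.image fun l : n.Partition => l.parts.filter (1 < ·) := by
    intro m hm
    obtain ⟨i, hi, rfl⟩ := mem_image.mp hm
    obtain ⟨l, hl⟩ := exists_partition_filter_one_lt_eq (hsum i hi) (hf i hi)
    exact mem_image.mpr ⟨l, mem_univ l, hl⟩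
  calc #s = #(s.image f) := (card_image_of_injOn hinj).symm
    _ ≤ _ := card_le_card image_subset
    _ ≤ numPartitions n := card_image_le

theorem sum_card_toFinset_parts_le_numPartitions (n : ℕ) :
    ∑ l ∈ restricted n (· ≠ 1), #l.parts.toFinset ≤ numPartitions n := by
  have add_sum_erase {l : n.Partition} {a : ℕ} (ha : a ∈ l.parts) :
      a + (l.parts.erase a).sum = n := (Multiset.sum_erase ha).trans l.parts_sum
  rw [← card_sigma]
  refine card_le_numPartitions (f := fun x => x.1.parts.erase x.2) ?_ ?_ ?_
  · rintro ⟨l, a⟩ hx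
    rw [mem_sigma, Multiset.mem_toFinset] at hx
    exact (Nat.le_add_left _ a).trans_eq (add_sum_erase hx.2)
  · rintro ⟨l, a⟩ hx b hb
    have hbl : b ∈ l.parts := Multiset.mem_of_mem_erase hb
    have hb_ne : b ≠ 1 := ne_of_mem_of_not_mem hbl (mem_restricted_ne.mp (mem_sigma.mp hx).1)
    exact (Nat.succ_le_of_lt (l.parts_pos hbl)).lt_of_ne' hb_ne
  · rintro ⟨l, a⟩ hx ⟨m, b⟩ hy (herase : l.parts.erase a = m.parts.erase b)
    rw [mem_coe, mem_sigma, Multiset.mem_toFinset] at hx hy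
    obtain rfl : a = b := Nat.add_right_cancel <|
      (add_sum_erase hx.2).trans (herase ▸ (add_sum_erase hy.2).symm)
    obtain rfl : l = m := by
      apply Nat.Partition.ext
      rw [← Multiset.cons_erase hx.2, herase, Multiset.cons_erase hy.2]
    rfl

theorem count_parts_le {n : ℕ} (l : n.Partition) (a : ℕ) : l.parts.count a ≤ n :=
  calc l.parts.count a ≤ l.parts.card := Multiset.count_le_card a _
    _ ≤ l.parts.sum := by
      simpa using Multiset.card_nsmul_le_sum (a := 1) fun i hi => l.parts_pos hi
    _ = n := l.parts_sum

theorem card_filter_card_toFinset_parts_le (n K : ℕ) :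
    #{l : n.Partition | #l.parts.toFinset ≤ K} ≤ (n + 1) ^ (2 * K) := by
  -- Such a partition is a sum of `K` blocks of equal parts, some of them possibly empty.
  let blocks : Finset (Multiset ℕ) :=
    (range (n + 1) ×ˢ range (n + 1)).image fun x => x.1 • {x.2}
  have mem_blocks {c a : ℕ} (hc : c ≤ n) (ha : a ≤ n) : c • {a} ∈ blocks :=
    mem_image.mpr ⟨(c, a), by simp [hc, ha], rfl⟩
  have parts_mem_nsmul_blocks (l : n.Partition) (hl : #l.parts.toFinset ≤ K) :
      l.parts ∈ K • blocks := by
    have zero_mem_blocks : (0 : Multiset ℕ) ∈ blocks := by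
      simpa using mem_blocks n.zero_le n.zero_le
    refine nsmul_subset_nsmul_right zero_mem_blocks hl ?_
    have sum_mem := Set.finsetSum_mem_finsetSum l.parts.toFinset
      (fun _ => (blocks : Set (Multiset ℕ)))
      (fun a => l.parts.count a • ({a} : Multiset ℕ)) fun a ha =>
        mem_blocks (count_parts_le l a) (l.le_of_mem_parts (Multiset.mem_toFinset.mp ha))
    rwa [Multiset.toFinset_sum_count_nsmul_eq, ← coe_sum, mem_coe, sum_const] at sum_mem
  calc #{l : n.Partition | #l.parts.toFinset ≤ K} ≤ #(K • blocks) :=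
        card_le_card_of_injOn Nat.Partition.parts
          (fun l hl => parts_mem_nsmul_blocks l (mem_filter_univ l |>.mp hl))
          fun _ _ _ _ h => Nat.Partition.ext h
    _ ≤ #blocks ^ K := card_nsmul_le
    _ ≤ ((n + 1) * (n + 1)) ^ K := by
      gcongr
      simpa using card_image_le (s := range (n + 1) ×ˢ range (n + 1))
    _ = (n + 1) ^ (2 * K) := by rw [pow_mul, sq]

theorem mul_card_restricted_ne_one_le (n K : ℕ) :
    K * #(restricted n (· ≠ 1)) ≤ numPartitions n + K * (n + 1) ^ (2 * K) :=
  calc K * #(restricted n (· ≠ 1)) = ∑ _ ∈ restricted n (· ≠ 1), K := by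
        rw [sum_const, smul_eq_mul, mul_comm]
    _ ≤ ∑ l ∈ restricted n (· ≠ 1),
          (#l.parts.toFinset + if #l.parts.toFinset ≤ K then K else 0) := by
        gcongr
        split_ifs <;> omega
    _ = ∑ l ∈ restricted n (· ≠ 1), #l.parts.toFinset +
          K * #{l ∈ restricted n (· ≠ 1) | #l.parts.toFinset ≤ K} := by
        rw [sum_add_distrib, ← sum_filter, sum_const, smul_eq_mul, mul_comm K]
    _ ≤ numPartitions n + K * (n + 1) ^ (2 * K) := by
        gcongr
        · exact sum_card_toFinset_parts_le_numPartitions n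
        · exact (card_le_card (filter_subset_filter _ (subset_univ _))).trans
            (card_filter_card_toFinset_parts_le n K)

theorem two_pow_card_le_numPartitions {n : ℕ} {s : Finset ℕ} (hs : ∀ a ∈ s, 1 < a)
    (hsum : ∑ a ∈ s, a ≤ n) : 2 ^ #s ≤ numPartitions n := by
  rw [← card_powerset]
  refine card_le_numPartitions (f := Finset.val) (fun t ht => ?_)
    (fun t ht a ha => hs a (mem_powerset.mp ht ha)) val_injective.injOn
  rw [sum_val]
  exact (sum_le_sum_of_subset (mem_powerset.mp ht)).trans hsum

theorem two_pow_sqrt_sub_one_le_numPartitions (n : ℕ) :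
    2 ^ (n.sqrt - 1) ≤ numPartitions n := by
  have sum_le : ∑ a ∈ Icc 2 n.sqrt, a ≤ n :=
    calc ∑ a ∈ Icc 2 n.sqrt, a ≤ #(Icc 2 n.sqrt) • n.sqrt :=
          sum_le_card_nsmul _ _ _ fun a ha => (mem_Icc.mp ha).2
      _ ≤ n.sqrt * n.sqrt := by
        rw [Nat.card_Icc, smul_eq_mul]
        gcongr
        omega
      _ ≤ n := n.sqrt_le
  simpa using two_pow_card_le_numPartitions (fun a ha => (mem_Icc.mp ha).1) sum_le

theorem isLittleO_add_one_pow_numPartitions (k : ℕ) :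
    (fun n : ℕ => ((n : ℝ) + 1) ^ k) =o[atTop] fun n => (numPartitions n : ℝ) := by
  have tendsto_sqrt_add_one : Tendsto (fun n : ℕ => n.sqrt + 1) atTop atTop :=
    tendsto_atTop_atTop.mpr fun b =>
      ⟨b * b, fun n hn => (Nat.le_sqrt.mpr hn).trans (Nat.le_succ _)⟩
  have pow_le_sqrt_pow (n : ℕ) : (n + 1) ^ k ≤ (n.sqrt + 1) ^ (2 * k) := by
    rw [pow_mul]
    exact Nat.pow_le_pow_left n.lt_succ_sqrt' k
  have two_pow_le (n : ℕ) : 2 ^ (n.sqrt + 1) ≤ 4 * numPartitions n :=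
    calc 2 ^ (n.sqrt + 1) ≤ 2 ^ (2 + (n.sqrt - 1)) := Nat.pow_le_pow_right two_pos (by omega)
      _ = 4 * 2 ^ (n.sqrt - 1) := pow_add 2 2 _
      _ ≤ 4 * numPartitions n := Nat.mul_le_mul_left 4 (two_pow_sqrt_sub_one_le_numPartitions n)
  calc (fun n : ℕ => ((n : ℝ) + 1) ^ k)
      =O[atTop] fun n => ((n.sqrt + 1 : ℕ) : ℝ) ^ (2 * k) := .of_norm_le fun n => by
        rw [Real.norm_of_nonneg (by positivity)]
        exact_mod_cast pow_le_sqrt_pow n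
    _ =o[atTop] fun n => (2 : ℝ) ^ (n.sqrt + 1) :=
        (isLittleO_pow_const_const_pow_of_one_lt (2 * k) one_lt_two).comp_tendsto
          tendsto_sqrt_add_one
    _ =O[atTop] fun n => (numPartitions n : ℝ) := .of_bound 4 <| .of_forall fun n => by
        rw [Real.norm_of_nonneg (by positivity), Real.norm_of_nonneg (by positivity)]
        exact_mod_cast two_pow_le n

theorem isLittleO_card_restricted_ne_one :
    (fun n => (#(restricted n (· ≠ 1)) : ℝ)) =o[atTop] fun n => (numPartitions n : ℝ) := by
  refine isLittleO_iff.mpr fun ε hε => ?_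
  obtain ⟨K, hK⟩ := exists_nat_gt (2 / ε)
  have hK_pos : (0 : ℝ) < K := (div_pos two_pos hε).trans hK
  filter_upwards [isLittleO_iff.mp (isLittleO_add_one_pow_numPartitions (2 * K)) (half_pos hε)]
    with n hn
  have card_le : (K : ℝ) * #(restricted n (· ≠ 1)) ≤
      numPartitions n + K * ((n : ℝ) + 1) ^ (2 * K) := by
    exact_mod_cast mul_card_restricted_ne_one_le n K
  have one_le : 1 ≤ ε / 2 * K := by
    rw [div_lt_iff₀ hε] at hK
    linarith
  rw [Real.norm_of_nonneg (by positivity), Real.norm_of_nonneg (by positivity)] at hn ⊢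
  refine le_of_mul_le_mul_left ?_ hK_pos
  calc (K : ℝ) * #(restricted n (· ≠ 1))
      ≤ 1 * numPartitions n + K * ((n : ℝ) + 1) ^ (2 * K) := by rwa [one_mul]
    _ ≤ ε / 2 * K * numPartitions n + K * (ε / 2 * numPartitions n) := by gcongr
    _ = K * (ε * numPartitions n) := by ring

theorem numPartitions_isEquivalent_add_one :
    (fun n => (numPartitions n : ℝ)) ~[atTop] fun n => (numPartitions (n + 1) : ℝ) := by
  have isLittleO_shift :=
    (isLittleO_card_restricted_ne_one.comp_tendsto (tendsto_add_atTop_nat 1)).neg_left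
  refine isLittleO_shift.congr_left fun n => ?_
  simp [numPartitions_add le_rfl n]

theorem numPartitions_isEquivalent_add (k : ℕ) :
    (fun n => (numPartitions n : ℝ)) ~[atTop] fun n => (numPartitions (n + k) : ℝ) := by
  induction k with
  | zero => exact IsEquivalent.refl
  | succ k ih =>
    exact ih.trans (numPartitions_isEquivalent_add_one.comp_tendsto (tendsto_add_atTop_nat k))

theorem p_sub_seven_div_p_tendsto_one_general (k : ℕ) :
    Tendsto (fun n : ℕ => (numPartitions (n - k) : ℝ) / (numPartitions n : ℝ)) atTop (nhds 1) := by
  have numPartitions_ne_zero (n : ℕ) : (numPartitions n : ℝ) ≠ 0 :=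
    Nat.cast_ne_zero.mpr (numPartitions_pos n).ne'
  rw [← tendsto_add_atTop_iff_nat k]
  simpa only [Nat.add_sub_cancel, Pi.div_def] using (isEquivalent_iff_tendsto_one
    (Eventually.of_forall fun n => numPartitions_ne_zero (n + k))).mp
      (numPartitions_isEquivalent_add k)

/-- `p(n−7)/p(n) → 1` as `n → ∞`. -/
theorem p_sub_seven_div_p_tendsto_one :
    Filter.Tendsto (fun n : ℕ => (numPartitions (n - 7) : ℝ) / (numPartitions n : ℝ))
      Filter.atTop (nhds 1) :=
  p_sub_seven_div_p_tendsto_one_general 7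
end

section
/- The sequence of real numbers p_ℙ(n)/M(n) tends to 0 as n tends to infinity. -/
/-- `M n`: the number of distinct multinomial coefficients with upper entry `n`, i.e. the
number of distinct values of `∏_{j ∈ λ} j!` as `λ` ranges over the partitions of `n`. -/
noncomputable def M (n : ℕ) : ℕ :=
  Set.ncard {v : ℕ | ∃ P : Nat.Partition n, factorialProd P.parts = v}

/-- `pP n`: the number of partitions of `n` all of whose parts are prime. -/
noncomputable def pP (n : ℕ) : ℕ :=
  Set.ncard {P : Nat.Partition n | ∀ j ∈ P.parts, Nat.Prime j}

/-!
Factorial products separate multisets of primes: the largest prime factor of `∏ j!` is the largest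
part, which can then be cancelled. Padding with ones therefore shows that `M n` is at least the
number `T n` of multisets of primes with sum at most `n`.

It remains to see that the partitions of `n` into primes are a vanishing proportion of those counted
by `T n`, and for this any infinite set of allowed parts will do. Erasing one part from a partition
of `n` with `d` distinct parts yields `d` multisets counted by `T n`, and since the total `n` is
known no multiset arises twice. Hence the partitions of `n` with more than `D` distinct parts number
at most `T n / D`, while the others are polynomially many and `T n` outgrows every polynomial.
-/

open Finset Filter

section PartitionsInto

/-- The partitions of `n` into elements of `A`, as multisets rather than terms of the dependent
type `Nat.Partition n`, so that partitions of different numbers can be compared. Parts are positive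
even if `0 ∈ A`. -/
noncomputable def partitionsInto (A : Set ℕ) (n : ℕ) : Finset (Multiset ℕ) :=
  open Classical in (Nat.Partition.restricted n (· ∈ A)).image Nat.Partition.parts

/-- The partitions into elements of `A` of all the numbers `0, …, n`. -/
noncomputable def partitionsIntoLE (A : Set ℕ) (n : ℕ) : Finset (Multiset ℕ) :=
  (range (n + 1)).biUnion (partitionsInto A)

variable {A : Set ℕ} {n : ℕ} {s t : Multiset ℕ}

theorem mem_partitionsInto :
    s ∈ partitionsInto A n ↔ (∀ j ∈ s, j ∈ A ∧ 0 < j) ∧ s.sum = n := by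
  simp only [partitionsInto, Nat.Partition.restricted, mem_image, mem_filter, mem_univ, true_and]
  constructor
  · rintro ⟨P, hP, rfl⟩
    exact ⟨fun j hj => ⟨hP j hj, P.parts_pos hj⟩, P.parts_sum⟩
  · rintro ⟨hs, hsum⟩
    exact ⟨⟨s, fun hj => (hs _ hj).2, hsum⟩, fun j hj => (hs j hj).1, rfl⟩

theorem mem_partitionsIntoLE :
    s ∈ partitionsIntoLE A n ↔ (∀ j ∈ s, j ∈ A ∧ 0 < j) ∧ s.sum ≤ n := by
  simp [partitionsIntoLE, mem_partitionsInto, and_comm]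

theorem partitionsInto_subset_partitionsIntoLE : partitionsInto A n ⊆ partitionsIntoLE A n :=
  subset_biUnion_of_mem (partitionsInto A) (self_mem_range_succ n)

theorem zero_mem_partitionsIntoLE : 0 ∈ partitionsIntoLE A n := by
  simp [mem_partitionsIntoLE]

theorem card_partitionsIntoLE_pos : 0 < #(partitionsIntoLE A n) :=
  card_pos.2 ⟨0, zero_mem_partitionsIntoLE⟩

theorem mem_partitionsIntoLE_of_le (ht : t ∈ partitionsIntoLE A n) (hst : s ≤ t) :
    s ∈ partitionsIntoLE A n := by
  rw [mem_partitionsIntoLE] at ht ⊢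
  obtain ⟨u, rfl⟩ := Multiset.le_iff_exists_add.1 hst
  rw [Multiset.sum_add] at ht
  exact ⟨fun j hj => ht.1 j (Multiset.mem_add.2 (Or.inl hj)), by omega⟩

theorem card_le_of_mem_partitionsIntoLE (hs : s ∈ partitionsIntoLE A n) : s.card ≤ n := by
  rw [mem_partitionsIntoLE] at hs
  calc s.card = s.card • 1 := by simp
    _ ≤ s.sum := Multiset.card_nsmul_le_sum fun j hj => (hs.1 j hj).2
    _ ≤ n := hs.2

theorem sum_card_toFinset_le (A : Set ℕ) (n : ℕ) :
    ∑ s ∈ partitionsInto A n, #s.toFinset ≤ #(partitionsIntoLE A n) := by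
  rw [← card_sigma]
  refine card_le_card_of_injOn (fun x => x.1.erase x.2) ?_ ?_
  · rintro ⟨s, p⟩ hx
    have hs : s ∈ partitionsInto A n := (mem_sigma.1 hx).1
    exact mem_partitionsIntoLE_of_le (partitionsInto_subset_partitionsIntoLE hs) (s.erase_le p)
  · rintro ⟨s, p⟩ hx ⟨t, q⟩ hy (h : s.erase p = t.erase q)
    simp only [coe_sigma, Set.mem_sigma_iff, mem_coe, mem_partitionsInto,
      Multiset.mem_toFinset] at hx hy
    obtain ⟨⟨-, hs⟩, hp⟩ := hx
    obtain ⟨⟨-, ht⟩, hq⟩ := hy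
    rw [← Multiset.cons_erase hp, Multiset.sum_cons] at hs
    rw [← Multiset.cons_erase hq, Multiset.sum_cons, ← h] at ht
    obtain rfl : p = q := by omega
    obtain rfl : s = t := by rw [← Multiset.cons_erase hp, h, Multiset.cons_erase hq]
    rfl

theorem exists_eq_add_replicate_of_card_toFinset_le_succ {D : ℕ} (hs : s ∈ partitionsIntoLE A n)
    (hD : #s.toFinset ≤ D + 1) :
    ∃ u ∈ partitionsIntoLE A n, #u.toFinset ≤ D ∧
      ∃ a ≤ n, ∃ k ≤ n, s = u + Multiset.replicate k a := by
  obtain rfl | ⟨a, ha⟩ := s.empty_or_exists_mem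
  · exact ⟨0, hs, by simp, 0, n.zero_le, 0, n.zero_le, rfl⟩
  have hrest : #(s.filter (· ≠ a)).toFinset ≤ D := by
    rw [Multiset.toFinset_filter, filter_ne', card_erase_of_mem (Multiset.mem_toFinset.2 ha)]
    omega
  have ha_le : a ≤ n := (Multiset.le_sum_of_mem ha).trans (mem_partitionsIntoLE.1 hs).2
  have hcount : s.count a ≤ n := (s.count_le_card a).trans (card_le_of_mem_partitionsIntoLE hs)
  refine ⟨s.filter (· ≠ a), mem_partitionsIntoLE_of_le hs (s.filter_le _), hrest,
    a, ha_le, s.count a, hcount, ?_⟩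
  rw [← Multiset.filter_eq', add_comm]
  exact (Multiset.filter_add_not _ s).symm

theorem card_filter_card_toFinset_le (A : Set ℕ) (n D : ℕ) :
    #{s ∈ partitionsIntoLE A n | #s.toFinset ≤ D} ≤ (n + 1) ^ (2 * D) := by
  induction D with
  | zero =>
    rw [mul_zero, pow_zero, card_le_one_iff_subset_singleton]
    exact ⟨0, fun s hs => by simpa using (mem_filter.1 hs).2⟩
  | succ D ih =>
    have hsub : {s ∈ partitionsIntoLE A n | #s.toFinset ≤ D + 1} ⊆
        image₂ (fun u (x : ℕ × ℕ) => u + Multiset.replicate x.2 x.1)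
          {s ∈ partitionsIntoLE A n | #s.toFinset ≤ D} (range (n + 1) ×ˢ range (n + 1)) := by
      intro s hs
      obtain ⟨hs, hD⟩ := mem_filter.1 hs
      obtain ⟨u, hu, huD, a, ha, k, hk, rfl⟩ :=
        exists_eq_add_replicate_of_card_toFinset_le_succ hs hD
      exact mem_image₂.2 ⟨u, mem_filter.2 ⟨hu, huD⟩, (a, k),
        mem_product.2 ⟨mem_range_succ_iff.2 ha, mem_range_succ_iff.2 hk⟩, rfl⟩
    calc #{s ∈ partitionsIntoLE A n | #s.toFinset ≤ D + 1}
        ≤ #{s ∈ partitionsIntoLE A n | #s.toFinset ≤ D} * #(range (n + 1) ×ˢ range (n + 1)) :=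
          (card_le_card hsub).trans (card_image₂_le _ _ _)
      _ ≤ (n + 1) ^ (2 * D) * ((n + 1) * (n + 1)) := by
          rw [card_product, card_range]
          gcongr
      _ = (n + 1) ^ (2 * (D + 1)) := by ring

theorem mul_card_partitionsInto_le (A : Set ℕ) (n D : ℕ) :
    D * #(partitionsInto A n) ≤ #(partitionsIntoLE A n) + D * (n + 1) ^ (2 * D) := by
  have hmany : D * #{s ∈ partitionsInto A n | ¬ #s.toFinset ≤ D} ≤ #(partitionsIntoLE A n) :=
    calc D * #{s ∈ partitionsInto A n | ¬ #s.toFinset ≤ D}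
        ≤ ∑ s ∈ partitionsInto A n with ¬ #s.toFinset ≤ D, #s.toFinset := by
          rw [mul_comm]
          exact card_nsmul_le_sum _ _ _ fun s hs => (not_le.1 (mem_filter.1 hs).2).le
      _ ≤ ∑ s ∈ partitionsInto A n, #s.toFinset :=
          sum_le_sum_of_subset (filter_subset _ _)
      _ ≤ #(partitionsIntoLE A n) := sum_card_toFinset_le A n
  have hfew : #{s ∈ partitionsInto A n | #s.toFinset ≤ D} ≤ (n + 1) ^ (2 * D) :=
    (card_le_card (filter_subset_filter _ partitionsInto_subset_partitionsIntoLE)).trans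
      (card_filter_card_toFinset_le A n D)
  rw [← card_filter_add_card_filter_not (fun s : Multiset ℕ => #s.toFinset ≤ D), mul_add, add_comm]
  gcongr

theorem pow_card_le_card_partitionsIntoLE {F : Finset ℕ} (hF : ∀ a ∈ F, a ∈ A ∧ 0 < a) {m : ℕ}
    (hm : m * ∑ a ∈ F, a ≤ n) : (m + 1) ^ #F ≤ #(partitionsIntoLE A n) := by
  have hcard : #(F.finsupp fun _ => range (m + 1)) = (m + 1) ^ #F := by simp
  rw [← hcard]
  refine card_le_card_of_injOn Finsupp.toMultiset (fun f hf => ?_)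
    Multiset.toFinsupp.symm.injective.injOn
  obtain ⟨hsupp, hf⟩ := mem_finsupp_iff.1 hf
  refine mem_partitionsIntoLE.2 ⟨fun j hj => hF j (hsupp ((f.mem_toMultiset j).1 hj)), ?_⟩
  calc f.toMultiset.sum = ∑ a ∈ F, f a * a := by
        rw [sum_multiset_count_of_subset _ F (by rwa [Finsupp.toFinset_toMultiset])]
        simp only [Finsupp.count_toMultiset, smul_eq_mul]
    _ ≤ ∑ a ∈ F, m * a :=
        sum_le_sum fun a ha => Nat.mul_le_mul_right a (mem_range_succ_iff.1 (hf a ha))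
    _ = m * ∑ a ∈ F, a := (mul_sum ..).symm
    _ ≤ n := hm

theorem succ_pow_card_le_mul_card_partitionsIntoLE {F : Finset ℕ} (hne : F.Nonempty)
    (hF : ∀ a ∈ F, a ∈ A ∧ 0 < a) :
    (n + 1) ^ #F ≤ (∑ a ∈ F, a) ^ #F * #(partitionsIntoLE A n) := by
  set S := ∑ a ∈ F, a
  have hS : 0 < S := sum_pos (fun a ha => (hF a ha).2) hne
  calc (n + 1) ^ #F ≤ (S * (n / S + 1)) ^ #F :=
        Nat.pow_le_pow_left (Nat.lt_mul_div_succ n hS) _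
    _ = S ^ #F * (n / S + 1) ^ #F := mul_pow ..
    _ ≤ S ^ #F * #(partitionsIntoLE A n) :=
        Nat.mul_le_mul_left _ (pow_card_le_card_partitionsIntoLE hF (Nat.div_mul_le_self n S))

theorem eventually_mul_pow_le_card_partitionsIntoLE (hA : A.Infinite) (C k : ℕ) :
    ∀ᶠ n in atTop, C * (n + 1) ^ k ≤ #(partitionsIntoLE A n) := by
  obtain ⟨F, hFA, hcard⟩ := (hA.sdiff (Set.finite_singleton 0)).exists_subset_card_eq (k + 1)
  have hF : ∀ a ∈ F, a ∈ A ∧ 0 < a := fun a ha => ⟨(hFA ha).1, Nat.pos_of_ne_zero (hFA ha).2⟩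
  have hne : F.Nonempty := card_pos.1 (hcard ▸ k.succ_pos)
  set B := (∑ a ∈ F, a) ^ (k + 1)
  have hB : 0 < B := pow_pos (sum_pos (fun a ha => (hF a ha).2) hne) _
  filter_upwards [eventually_ge_atTop (B * C)] with n hn
  refine Nat.le_of_mul_le_mul_left ?_ hB
  calc B * (C * (n + 1) ^ k) = B * C * (n + 1) ^ k := (mul_assoc ..).symm
    _ ≤ (n + 1) * (n + 1) ^ k := Nat.mul_le_mul_right _ (hn.trans n.le_succ)
    _ = (n + 1) ^ (k + 1) := (pow_succ' ..).symm
    _ ≤ B * #(partitionsIntoLE A n) := by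
        simpa only [hcard] using succ_pow_card_le_mul_card_partitionsIntoLE (n := n) hne hF

theorem eventually_mul_card_partitionsInto_le (hA : A.Infinite) (D : ℕ) :
    ∀ᶠ n in atTop, D * #(partitionsInto A n) ≤ 2 * #(partitionsIntoLE A n) := by
  filter_upwards [eventually_mul_pow_le_card_partitionsIntoLE hA D (2 * D)] with n hn
  have := mul_card_partitionsInto_le A n D
  omega

theorem tendsto_card_partitionsInto_div_card_partitionsIntoLE (hA : A.Infinite) :
    Tendsto (fun n => (#(partitionsInto A n) : ℝ) / #(partitionsIntoLE A n)) atTop (nhds 0) := by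
  refine tendsto_order.2 ⟨fun a ha => .of_forall fun n => ha.trans_le (by positivity),
    fun ε hε => ?_⟩
  obtain ⟨D, hD⟩ := exists_nat_gt (2 / ε)
  have hD_pos : (0 : ℝ) < D := (by positivity : (0 : ℝ) < 2 / ε).trans hD
  filter_upwards [eventually_mul_card_partitionsInto_le hA D] with n hn
  have hT : (0 : ℝ) < #(partitionsIntoLE A n) := mod_cast card_partitionsIntoLE_pos
  calc (#(partitionsInto A n) : ℝ) / #(partitionsIntoLE A n) ≤ 2 / D := by
        rw [div_le_div_iff₀ hT hD_pos, mul_comm]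
        exact mod_cast hn
    _ < ε := (div_lt_comm₀ hε hD_pos).1 hD

end PartitionsInto

section FactorialProd

variable {s t : Multiset ℕ}

theorem factorialProd_cons (a : ℕ) (s : Multiset ℕ) :
    factorialProd (a ::ₘ s) = a.factorial * factorialProd s := by
  simp [factorialProd]

theorem factorialProd_add_replicate_one (s : Multiset ℕ) (k : ℕ) :
    factorialProd (s + Multiset.replicate k 1) = factorialProd s := by
  simp [factorialProd]

theorem prime_dvd_factorialProd_iff_s9 {q : ℕ} (hq : q.Prime) :
    q ∣ factorialProd s ↔ ∃ j ∈ s, q ≤ j := by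
  constructor
  · intro h
    obtain ⟨j, hj, hqj⟩ := hq.prime.exists_mem_multiset_map_dvd h
    exact ⟨j, hj, hq.dvd_factorial.1 hqj⟩
  · rintro ⟨j, hj, hqj⟩
    exact (hq.dvd_factorial.2 hqj).trans (Multiset.dvd_prod (Multiset.mem_map_of_mem _ hj))

theorem exists_le_mem_of_factorialProd_eq (hs : ∀ j ∈ s, j.Prime)
    (h : factorialProd s = factorialProd t) {a : ℕ} (ha : a ∈ s) : ∃ b ∈ t, a ≤ b := by
  rw [← prime_dvd_factorialProd_iff_s9 (hs a ha), ← h, prime_dvd_factorialProd_iff_s9 (hs a ha)]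
  exact ⟨a, ha, le_rfl⟩

theorem exists_mem_mem_of_factorialProd_eq (hs : ∀ j ∈ s, j.Prime) (ht : ∀ j ∈ t, j.Prime)
    (h : factorialProd s = factorialProd t) (hne : s ≠ 0) : ∃ a, a ∈ s ∧ a ∈ t := by
  obtain ⟨a, ha, hmax⟩ := s.toFinset.exists_max_image id (Multiset.toFinset_nonempty.2 hne)
  simp only [Multiset.mem_toFinset, id] at ha hmax
  obtain ⟨b, hb, hab⟩ := exists_le_mem_of_factorialProd_eq hs h ha
  obtain ⟨c, hc, hbc⟩ := exists_le_mem_of_factorialProd_eq ht h.symm hb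
  exact ⟨a, ha, (hab.antisymm (hbc.trans (hmax c hc))) ▸ hb⟩

theorem factorialProd_injOn_primes_s9 : Set.InjOn factorialProd {s | ∀ j ∈ s, j.Prime} := by
  intro s hs t ht h
  induction hk : s.card generalizing s t with
  | zero =>
    obtain rfl := Multiset.card_eq_zero.1 hk
    refine (Multiset.eq_zero_of_forall_notMem fun b hb => ?_).symm
    obtain ⟨c, hc, -⟩ := exists_le_mem_of_factorialProd_eq ht h.symm hb
    exact Multiset.notMem_zero c hc
  | succ k ih =>
    have hne : s ≠ 0 := Multiset.card_pos.1 (hk ▸ k.succ_pos)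
    obtain ⟨a, ha, hat⟩ := exists_mem_mem_of_factorialProd_eq hs ht h hne
    obtain ⟨s, rfl⟩ := Multiset.exists_cons_of_mem ha
    obtain ⟨t, rfl⟩ := Multiset.exists_cons_of_mem hat
    rw [factorialProd_cons, factorialProd_cons] at h
    rw [ih (fun j hj => hs j (Multiset.mem_cons_of_mem hj))
      (fun j hj => ht j (Multiset.mem_cons_of_mem hj))
      (Nat.eq_of_mul_eq_mul_left a.factorial_pos h) (by simpa using hk)]

end FactorialProd

theorem exists_partition_factorialProd_eq {A : Set ℕ} {n : ℕ} {s : Multiset ℕ}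
    (hs : s ∈ partitionsIntoLE A n) :
    ∃ P : Nat.Partition n, factorialProd P.parts = factorialProd s := by
  obtain ⟨hs, hsum⟩ := mem_partitionsIntoLE.1 hs
  refine ⟨⟨s + Multiset.replicate (n - s.sum) 1, fun {j} hj => ?_, ?_⟩,
    factorialProd_add_replicate_one s _⟩
  · obtain hj | hj := Multiset.mem_add.1 hj
    · exact (hs j hj).2
    · exact (Multiset.eq_of_mem_replicate hj).symm ▸ one_pos
  · simp [hsum]

theorem card_partitionsIntoLE_primes_le_M (n : ℕ) :
    #(partitionsIntoLE {p | p.Prime} n) ≤ M n := by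
  rw [← Set.ncard_coe_finset]
  refine Set.ncard_le_ncard_of_injOn factorialProd
    (fun s hs => exists_partition_factorialProd_eq hs) ?_ (Set.finite_range _)
  exact factorialProd_injOn_primes_s9.mono fun s hs j hj => ((mem_partitionsIntoLE.1 hs).1 j hj).1

theorem pP_eq_card_partitionsInto_primes (n : ℕ) :
    pP n = #(partitionsInto {p | p.Prime} n) := by
  classical
  rw [partitionsInto, card_image_of_injective _ fun P Q => Nat.Partition.ext,
    ← Set.ncard_coe_finset, pP]
  simp [Nat.Partition.restricted]

/-- `p_ℙ(n) / M(n) → 0` as `n → ∞`. -/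
theorem pP_div_M_tendsto_zero :
    Filter.Tendsto (fun n : ℕ => (pP n : ℝ) / (M n : ℝ)) Filter.atTop (nhds 0) := by
  refine squeeze_zero (fun n => by positivity) (fun n => ?_)
    (tendsto_card_partitionsInto_div_card_partitionsIntoLE Nat.infinite_setOfPred_prime)
  rw [pP_eq_card_partitionsInto_primes]
  have hT : (0 : ℝ) < #(partitionsIntoLE {p | p.Prime} n) := mod_cast card_partitionsIntoLE_pos
  have hTM : (#(partitionsIntoLE {p | p.Prime} n) : ℝ) ≤ M n :=
    mod_cast card_partitionsIntoLE_primes_le_M n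
  exact div_le_div_of_nonneg_left (Nat.cast_nonneg _) hT hTM
end

section
/- Let S be a finite nonempty set of positive integers and let d be the least common multiple of the elements of S. Then M_S(n) is eventually a quasipolynomial with period d: there exist a natural number n₀ and polynomials f_0, f_1, …, f_{d−1} with rational coefficients such that for all n ≥ n₀, M_S(n) = f_{n mod d}(n). -/
/-- `MS S n`: the number of distinct multinomial coefficients with upper entry `n` and
lower entries in `S`. -/
noncomputable def MS (S : Set ℕ) (n : ℕ) : ℕ :=
  Set.ncard {v : ℕ | ∃ P : Nat.Partition n, (∀ j ∈ P.parts, j ∈ S) ∧ factorialProd P.parts = v}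

/-!
A partition with parts in `S` is an exponent vector `a : S →₀ ℕ`, and the product of the factorials
of its parts is additive in `a` (written in `Additive ℕ`). Among the vectors with given size and
product keep the least one for a monomial order. Translation invariance of the order makes the kept
vectors a lower set of `S →₀ ℕ`, and `M_S(n)` counts those of weight `n`.

By Dickson's lemma lower sets of `S →₀ ℕ` are well-founded under inclusion. If `L` involves the
coordinate `i`, its generating function is that of the proper subset `{a ∈ L | a i = 0}` plus
`X ^ i` times that of `{a | a + eᵢ ∈ L} ⊆ L`. Either the second set is also proper, or it equals `L`
and the generating function of `L` is that of the first set divided by `1 - X ^ i`. By Noetherian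
induction it is a polynomial over a power of `1 - X ^ d`. Along each residue class modulo `d` this
becomes a polynomial over a power of `1 - X`, whose coefficients are eventually given by a Hilbert
polynomial.
-/

open Finsupp PowerSeries
open scoped Polynomial

instance wellFoundedLT_lowerSet {α : Type*} [LE α] [WellQuasiOrderedLE α] :
    WellFoundedLT (LowerSet α) := by
  refine ⟨RelEmbedding.wellFounded_iff_isEmpty.2 ⟨fun L => ?_⟩⟩
  have anti : StrictAnti L := fun i j hij => L.map_rel_iff.2 hij
  have exists_dropped (i : ℕ) : ∃ x ∈ L i, x ∉ L (i + 1) :=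
    Set.not_subset.1 (anti i.lt_succ_self).not_ge
  choose x x_mem x_notMem using exists_dropped
  obtain ⟨i, j, hij, hle⟩ := wellQuasiOrdered_le x
  exact x_notMem i ((L (i + 1)).lower hle (anti.antitone hij (x_mem j)))

section PeriodicDenominator

variable {R : Type*} [CommRing R] {d : ℕ} {F G : R⟦X⟧}

/-- `F` is a rational power series whose denominator is a power of `1 - X ^ d`. The quotient is
encoded by clearing the denominator. -/
def HasPeriodicDenominator (d : ℕ) (F : R⟦X⟧) : Prop :=
  ∃ (m : ℕ) (P : R[X]), F * (1 - X ^ d) ^ m = (P : R⟦X⟧)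

theorem hasPeriodicDenominator_coe (d : ℕ) (P : R[X]) : HasPeriodicDenominator d (P : R⟦X⟧) :=
  ⟨0, P, by simp⟩

namespace HasPeriodicDenominator

theorem add (hF : HasPeriodicDenominator d F) (hG : HasPeriodicDenominator d G) :
    HasPeriodicDenominator d (F + G) := by
  obtain ⟨m, P, hP⟩ := hF
  obtain ⟨k, Q, hQ⟩ := hG
  refine ⟨m + k, P * (1 - Polynomial.X ^ d) ^ k + Q * (1 - Polynomial.X ^ d) ^ m, ?_⟩
  push_cast
  rw [← hP, ← hQ]
  ring

theorem mul (hF : HasPeriodicDenominator d F) (hG : HasPeriodicDenominator d G) :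
    HasPeriodicDenominator d (F * G) := by
  obtain ⟨m, P, hP⟩ := hF
  obtain ⟨k, Q, hQ⟩ := hG
  refine ⟨m + k, P * Q, ?_⟩
  push_cast
  rw [← hP, ← hQ]
  ring

theorem X_pow_mul (hF : HasPeriodicDenominator d F) (k : ℕ) :
    HasPeriodicDenominator d (X ^ k * F) := by
  simpa using (hasPeriodicDenominator_coe d (Polynomial.X ^ k)).mul hF

theorem of_mul_one_sub_X_pow {k : ℕ} (hk : k ∣ d)
    (hF : HasPeriodicDenominator d (F * (1 - X ^ k))) :
    HasPeriodicDenominator d F := by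
  obtain ⟨m, P, hP⟩ := hF
  obtain ⟨c, rfl⟩ := hk
  obtain ⟨Q, hQ⟩ : (1 - Polynomial.X ^ k : R[X]) ∣ 1 - Polynomial.X ^ (k * c) := by
    rw [pow_mul]
    exact one_sub_dvd_one_sub_pow _ _
  have hQ_coe : (1 - X ^ (k * c) : R⟦X⟧) = (1 - X ^ k) * (Q : R⟦X⟧) := by
    simpa using congrArg ((↑) : R[X] → R⟦X⟧) hQ
  refine ⟨m + 1, P * Q, ?_⟩
  calc F * (1 - X ^ (k * c)) ^ (m + 1)
      = F * (1 - X ^ (k * c)) ^ m * (1 - X ^ (k * c)) := by ring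
    _ = F * (1 - X ^ (k * c)) ^ m * ((1 - X ^ k) * (Q : R⟦X⟧)) := by
        rw [← hQ_coe]
    _ = F * (1 - X ^ k) * (1 - X ^ (k * c)) ^ m * (Q : R⟦X⟧) := by ring
    _ = ((P * Q : R[X]) : R⟦X⟧) := by rw [hP, Polynomial.coe_mul]

end HasPeriodicDenominator

end PeriodicDenominator

section ResidueSeries

variable {R : Type*} {d r : ℕ}

/-- The series `∑ n, F_{d n + r} X ^ n` collecting the coefficients of `F` whose index is congruent
to `r` modulo `d`. -/
noncomputable def residueSeries [Semiring R] (d r : ℕ) (F : R⟦X⟧) : R⟦X⟧ :=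
  mk fun n => coeff (d * n + r) F

theorem residueSeries_mul_one_sub_X_pow [Ring R] (hr : r < d) (F : R⟦X⟧) :
    residueSeries d r (F * (1 - X ^ d)) = residueSeries d r F * (1 - X) := by
  ext n
  cases n with
  | zero => simp [residueSeries, mul_sub, coeff_mul_X_pow', hr.not_ge]
  | succ n =>
    have index_shift : d * (n + 1) + r = d * n + r + d := by ring
    simp [residueSeries, mul_sub, coeff_succ_mul_X, index_shift, coeff_mul_X_pow]

theorem residueSeries_mul_one_sub_X_pow_pow [Ring R] (hr : r < d) (F : R⟦X⟧) (m : ℕ) :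
    residueSeries d r (F * (1 - X ^ d) ^ m) = residueSeries d r F * (1 - X) ^ m := by
  induction m with
  | zero => simp
  | succ m ih => rw [pow_succ, ← mul_assoc, residueSeries_mul_one_sub_X_pow hr, ih, mul_assoc,
      ← pow_succ]

theorem exists_coe_eq_residueSeries_coe [Semiring R] (hd : d ≠ 0) (r : ℕ) (P : R[X]) :
    ∃ Q : R[X], (Q : R⟦X⟧) = residueSeries d r (P : R⟦X⟧) := by
  refine ⟨trunc (P.natDegree + 1) (residueSeries d r P), ?_⟩
  ext n
  rw [Polynomial.coeff_coe, coeff_trunc]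
  split_ifs with hn
  · rfl
  · have natDegree_lt : P.natDegree < d * n + r := by
      nlinarith [Nat.pos_of_ne_zero hd]
    simp [residueSeries, Polynomial.coeff_eq_zero_of_natDegree_lt natDegree_lt]

end ResidueSeries

section Quasipolynomial

/-- For all large `n`, `g n` is the value at `n` of a polynomial depending only on `n % d`. -/
def IsEventuallyQuasipolynomial {K : Type*} [Semiring K] (d : ℕ) (g : ℕ → K) : Prop :=
  ∃ (n₀ : ℕ) (f : ℕ → K[X]), ∀ n : ℕ, n₀ ≤ n → g n = (f (n % d)).eval (n : K)

variable {K : Type*} [Field K] [CharZero K] {d : ℕ}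

theorem exists_polynomial_eval_eq_coeff_of_mul_one_sub_X_pow_eq {F : K⟦X⟧} {P : K[X]} {m : ℕ}
    (hF : F * (1 - X) ^ m = (P : K⟦X⟧)) :
    ∃ (n₀ : ℕ) (f : K[X]), ∀ n, n₀ ≤ n → coeff n F = f.eval (n : K) := by
  refine ⟨P.natDegree + 1, P.hilbertPoly m, fun n hn => ?_⟩
  have F_eq : F = P * (invOneSubPow K m).val := by
    rw [← hF, ← invOneSubPow_inv_eq_one_sub_pow, mul_assoc, Units.inv_val, mul_one]
  rw [F_eq, Polynomial.coeff_mul_invOneSubPow_eq_hilbertPoly_eval m hn]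

theorem isEventuallyQuasipolynomial_of_residues (hd : d ≠ 0) {g : ℕ → K}
    (hg : ∀ r < d, ∃ (n₀ : ℕ) (f : K[X]), ∀ n, n₀ ≤ n → g (d * n + r) = f.eval (n : K)) :
    IsEventuallyQuasipolynomial d g := by
  choose! n₀ f hf using hg
  refine ⟨d * (Finset.range d).sup n₀,
    fun r => (f r).comp (Polynomial.C (d : K)⁻¹ * (Polynomial.X - Polynomial.C (r : K))),
    fun n hn => ?_⟩
  have mod_lt : n % d < d := Nat.mod_lt n (Nat.pos_of_ne_zero hd)
  have le_div : n₀ (n % d) ≤ n / d :=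
    (Finset.le_sup (Finset.mem_range.2 mod_lt)).trans
      ((Nat.le_div_iff_mul_le (Nat.pos_of_ne_zero hd)).2 (by rwa [mul_comm]))
  have div_cast : ((n / d : ℕ) : K) = (d : K)⁻¹ * ((n : K) - ((n % d : ℕ) : K)) := by
    have hd_cast : (d : K) ≠ 0 := Nat.cast_ne_zero.2 hd
    rw [eq_inv_mul_iff_mul_eq₀ hd_cast, eq_sub_iff_add_eq]
    exact_mod_cast Nat.div_add_mod n d
  have value := hf (n % d) mod_lt (n / d) le_div
  rw [Nat.div_add_mod] at value
  simp [value, div_cast]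

theorem HasPeriodicDenominator.isEventuallyQuasipolynomial_coeff (hd : d ≠ 0) {F : K⟦X⟧}
    (hF : HasPeriodicDenominator d F) :
    IsEventuallyQuasipolynomial d fun n => coeff n F := by
  obtain ⟨m, P, hP⟩ := hF
  refine isEventuallyQuasipolynomial_of_residues hd fun r hr => ?_
  obtain ⟨Q, hQ⟩ := exists_coe_eq_residueSeries_coe hd r P
  simpa [residueSeries] using exists_polynomial_eval_eq_coeff_of_mul_one_sub_X_pow_eq
    (F := residueSeries d r F) (by rw [← residueSeries_mul_one_sub_X_pow_pow hr, hP, hQ])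

end Quasipolynomial

section WeightSeries

variable {σ : Type*} (R : Type*) [Semiring R] (w : σ → ℕ)

/-- The generating function, by weight, of a set `L` of exponent vectors: the coefficient of
`X ^ n` is the number of `a ∈ L` of weight `n`. Since `Set.ncard` is zero on infinite sets, this
is meaningful only when each weight is attained finitely often. -/
noncomputable def weightSeries (L : Set (σ →₀ ℕ)) : R⟦X⟧ :=
  mk fun n => ({a ∈ L | weight w a = n}.ncard : R)

theorem weightSeries_empty : weightSeries R w ∅ = 0 := by
  ext n
  simp [weightSeries]

theorem weightSeries_singleton (a : σ →₀ ℕ) :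
    weightSeries R w {a} = X ^ weight w a := by
  ext n
  rw [weightSeries, coeff_mk, coeff_X_pow]
  split_ifs with hn
  · have fiber_eq : {b ∈ ({a} : Set (σ →₀ ℕ)) | weight w b = n} = {a} := by
      ext b
      simp +contextual [hn]
    rw [fiber_eq, Set.ncard_singleton, Nat.cast_one]
  · have fiber_eq : {b ∈ ({a} : Set (σ →₀ ℕ)) | weight w b = n} = ∅ := by
      ext b
      simp +contextual [Ne.symm hn]
    rw [fiber_eq, Set.ncard_empty, Nat.cast_zero]

theorem weightSeries_image_add_right (L : Set (σ →₀ ℕ)) (c : σ →₀ ℕ) :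
    weightSeries R w ((· + c) '' L) = X ^ weight w c * weightSeries R w L := by
  ext n
  have fiber_eq : {a ∈ (· + c) '' L | weight w a = n} =
      (· + c) '' {a ∈ L | weight w a + weight w c = n} := by
    ext a
    simp only [Set.mem_ofPred_eq, Set.mem_image]
    constructor
    · rintro ⟨⟨b, hb, rfl⟩, hn⟩
      exact ⟨b, ⟨hb, by rw [← hn, map_add]⟩, rfl⟩
    · rintro ⟨b, ⟨hb, hn⟩, rfl⟩
      exact ⟨⟨b, hb, rfl⟩, by rw [← hn, map_add]⟩
  rw [coeff_X_pow_mul', weightSeries, weightSeries, coeff_mk,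
    coeff_mk, fiber_eq, Set.ncard_image_of_injective _ (add_left_injective c)]
  split_ifs with hn
  · simp only [eq_tsub_iff_add_eq_of_le hn]
  · have empty : {a ∈ L | weight w a + weight w c = n} = ∅ := by
      ext a
      simp only [Set.mem_ofPred_eq, Set.mem_empty_iff_false, iff_false]
      omega
    rw [empty, Set.ncard_empty, Nat.cast_zero]

variable {w} [Finite σ]

theorem weightSeries_union (hw : ∀ i, w i ≠ 0) {L L' : Set (σ →₀ ℕ)} (hL : Disjoint L L') :
    weightSeries R w (L ∪ L') = weightSeries R w L + weightSeries R w L' := by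
  ext n
  have fiber_finite (A : Set (σ →₀ ℕ)) : {a ∈ A | weight w a = n}.Finite :=
    (finite_of_nat_weight_eq w hw n).subset fun a ha => ha.2
  have fiber_disjoint : Disjoint {a ∈ L | weight w a = n} {a ∈ L' | weight w a = n} :=
    hL.mono (fun a ha => ha.1) (fun a ha => ha.1)
  have fiber_union : {a ∈ L ∪ L' | weight w a = n} =
      {a ∈ L | weight w a = n} ∪ {a ∈ L' | weight w a = n} := Set.union_inter_distrib_right ..
  simp only [weightSeries, map_add, coeff_mk]
  rw [fiber_union, Set.ncard_union_eq fiber_disjoint (fiber_finite L) (fiber_finite L'),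
    Nat.cast_add]

end WeightSeries

section LowerSets

variable {σ : Type*}

/-- The exponent vectors of `L` not involving the coordinate `i`. -/
def coordinateFace (L : LowerSet (σ →₀ ℕ)) (i : σ) : LowerSet (σ →₀ ℕ) where
  carrier := {a ∈ L | a i = 0}
  lower' _ _ hba ha := ⟨L.lower hba ha.1, Nat.eq_zero_of_le_zero (ha.2 ▸ hba i)⟩

/-- The exponent vectors that stay in `L` after raising the coordinate `i` by one. On complements
this is the colon ideal `(I : Xᵢ)` of monomial ideals. -/
noncomputable def coordinateColon (L : LowerSet (σ →₀ ℕ)) (i : σ) : LowerSet (σ →₀ ℕ) where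
  carrier := {a | a + single i 1 ∈ L}
  lower' _ _ hba ha := L.lower (add_le_add_left hba _) ha

theorem coordinateColon_le (L : LowerSet (σ →₀ ℕ)) (i : σ) : coordinateColon L i ≤ L :=
  fun _ ha => L.lower le_self_add ha

theorem coordinateFace_lt {L : LowerSet (σ →₀ ℕ)} {a : σ →₀ ℕ} (ha : a ∈ L) {i : σ}
    (hai : a i ≠ 0) : coordinateFace L i < L :=
  lt_of_le_not_ge (fun _ hb => hb.1) fun h => hai (h ha).2

theorem coe_eq_coordinateFace_union_image_coordinateColon (L : LowerSet (σ →₀ ℕ)) (i : σ) :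
    (L : Set (σ →₀ ℕ)) =
      (coordinateFace L i : Set (σ →₀ ℕ)) ∪ (· + single i 1) '' coordinateColon L i := by
  ext a
  constructor
  · intro ha
    by_cases hai : a i = 0
    · exact Or.inl ⟨ha, hai⟩
    · have sub_add : a - single i 1 + single i 1 = a :=
        tsub_add_cancel_of_le (single_le_iff.2 (Nat.one_le_iff_ne_zero.2 hai))
      refine Or.inr ⟨a - single i 1, ?_, sub_add⟩
      change a - single i 1 + single i 1 ∈ L
      rwa [sub_add]
  · rintro (ha | ⟨b, hb, rfl⟩)
    exacts [ha.1, hb]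

theorem disjoint_coordinateFace_image_coordinateColon (L : LowerSet (σ →₀ ℕ)) (i : σ) :
    Disjoint (coordinateFace L i : Set (σ →₀ ℕ)) ((· + single i 1) '' coordinateColon L i) := by
  rw [Set.disjoint_left]
  rintro _ ⟨-, hai⟩ ⟨b, -, rfl⟩
  simp at hai

variable (R : Type*) [Finite σ] {w : σ → ℕ}

theorem weightSeries_eq_coordinateFace_add_coordinateColon [Semiring R] (hw : ∀ i, w i ≠ 0)
    (L : LowerSet (σ →₀ ℕ)) (i : σ) :
    weightSeries R w L = weightSeries R w (coordinateFace L i) +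
      X ^ w i * weightSeries R w (coordinateColon L i) := by
  conv_lhs => rw [coe_eq_coordinateFace_union_image_coordinateColon L i]
  rw [weightSeries_union R hw (disjoint_coordinateFace_image_coordinateColon L i),
    weightSeries_image_add_right, weight_single, one_smul]

theorem hasPeriodicDenominator_weightSeries [CommRing R] (hw : ∀ i, w i ≠ 0) {d : ℕ}
    (hd : ∀ i, w i ∣ d) (L : LowerSet (σ →₀ ℕ)) :
    HasPeriodicDenominator d (weightSeries R w L) := by
  induction L using WellFoundedLT.induction with
  | _ L ih =>
  by_cases hL : ∃ i, ∃ a ∈ L, a i ≠ 0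
  · obtain ⟨i, a, ha, hai⟩ := hL
    have split := weightSeries_eq_coordinateFace_add_coordinateColon R hw L i
    have face := ih _ (coordinateFace_lt ha hai)
    rcases (coordinateColon_le L i).lt_or_eq with colon_lt | colon_eq
    · rw [split]
      exact face.add ((ih _ colon_lt).X_pow_mul (w i))
    · rw [colon_eq] at split
      refine .of_mul_one_sub_X_pow (hd i) ?_
      rwa [show weightSeries R w L * (1 - X ^ w i) =
        weightSeries R w (coordinateFace L i) by linear_combination split]
  · push Not at hL
    have subset_zero : (L : Set (σ →₀ ℕ)) ⊆ {0} := fun a ha => Finsupp.ext fun i => hL i a ha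
    rcases Set.subset_singleton_iff_eq.1 subset_zero with L_eq | L_eq
    · simpa [L_eq, weightSeries_empty] using hasPeriodicDenominator_coe d (0 : R[X])
    · simpa [L_eq, weightSeries_singleton] using hasPeriodicDenominator_coe d (1 : R[X])

end LowerSets

section Representatives

variable {σ N : Type*} [AddZeroClass N] (m : MonomialOrder σ)

/-- The exponent vectors that are minimal, for the monomial order `m`, in their fibre of `φ`. These
are the standard monomials of the binomial ideal attached to `φ`. -/
def minimalRepresentatives (φ : (σ →₀ ℕ) →+ N) : LowerSet (σ →₀ ℕ) where
  carrier := {a | ∀ b, φ b = φ a → m.toSyn a ≤ m.toSyn b}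
  lower' a c hca ha b hbc := by
    have add_sub : c + (a - c) = a := add_tsub_cancel_of_le hca
    have a_le : m.toSyn a ≤ m.toSyn (b + (a - c)) :=
      ha _ (by rw [map_add, hbc, ← map_add, add_sub])
    have translate : m.toSyn c + m.toSyn (a - c) ≤ m.toSyn b + m.toSyn (a - c) := by
      rwa [← map_add, ← map_add, add_sub]
    exact le_of_add_le_add_right translate

theorem injOn_minimalRepresentatives (φ : (σ →₀ ℕ) →+ N) :
    Set.InjOn φ (minimalRepresentatives m φ) := fun a ha b hb hab =>
  m.toSyn.injective ((ha b hab.symm).antisymm (hb a hab))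

theorem exists_mem_minimalRepresentatives (φ : (σ →₀ ℕ) →+ N) (a : σ →₀ ℕ) :
    ∃ b ∈ minimalRepresentatives m φ, φ b = φ a := by
  obtain ⟨b, hb, b_min⟩ :=
    (InvImage.wf m.toSyn wellFounded_lt).has_min {b | φ b = φ a} ⟨a, rfl⟩
  exact ⟨b, fun c hc => not_lt.1 (b_min c (hc.trans hb)), hb⟩

theorem ncard_image_weight_fiber (w : σ → ℕ) (φ : (σ →₀ ℕ) →+ N) (n : ℕ) :
    (φ '' {a | weight w a = n}).ncard =
      {a ∈ minimalRepresentatives m ((weight w).prod φ) | weight w a = n}.ncard := by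
  have image_eq : φ '' {a | weight w a = n} =
      φ '' {a ∈ minimalRepresentatives m ((weight w).prod φ) | weight w a = n} := by
    refine (Set.image_subset_iff.2 fun a ha => ?_).antisymm (Set.image_mono fun a ha => ha.2)
    obtain ⟨b, hb, hba⟩ := exists_mem_minimalRepresentatives m ((weight w).prod φ) a
    obtain ⟨weight_eq, value_eq⟩ := Prod.ext_iff.1 hba
    exact ⟨b, ⟨hb, weight_eq.trans ha⟩, value_eq⟩
  rw [image_eq, Set.InjOn.ncard_image]
  rintro a ⟨ha, weight_a⟩ b ⟨hb, weight_b⟩ hab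
  exact injOn_minimalRepresentatives m _ ha hb (Prod.ext (weight_a.trans weight_b.symm) hab)

theorem isEventuallyQuasipolynomial_ncard_image_weight_fiber (K : Type*) [Field K] [CharZero K]
    [Finite σ] {w : σ → ℕ} (hw : ∀ i, w i ≠ 0) {d : ℕ} (hd : d ≠ 0) (hwd : ∀ i, w i ∣ d)
    (φ : (σ →₀ ℕ) →+ N) :
    IsEventuallyQuasipolynomial d fun n => ((φ '' {a | weight w a = n}).ncard : K) := by
  obtain ⟨_, _⟩ := exists_wellFoundedLT σ
  simpa [weightSeries, ← ncard_image_weight_fiber] using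
    (hasPeriodicDenominator_weightSeries K hw hwd
      (minimalRepresentatives .lex ((weight w).prod φ))).isEventuallyQuasipolynomial_coeff hd

end Representatives

section Partitions

theorem sum_map_toMultiset {σ N : Type*} [AddCommMonoid N] (u : σ → N) (a : σ →₀ ℕ) :
    ((toMultiset a).map u).sum = weight u a := by
  rw [toMultiset_map, sum_toMultiset, weight_apply, sum_mapDomain_index] <;> simp [add_smul]

theorem partition_sums_eq_image_weight {N : Type*} [AddCommMonoid N] {S : Set ℕ}
    (hS : 0 ∉ S) (u : ℕ → N) (n : ℕ) :
    {x | ∃ P : n.Partition, (∀ j ∈ P.parts, j ∈ S) ∧ (P.parts.map u).sum = x} =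
      weight (R := ℕ) (fun i : S => u i) '' {a | weight (fun i : S => (i : ℕ)) a = n} := by
  classical
  ext x
  constructor
  · rintro ⟨P, hP, rfl⟩
    obtain ⟨A, hA⟩ : ∃ A : Multiset S, A.map (↑) = P.parts := CanLift.prf P.parts hP
    refine ⟨Multiset.toFinsupp A, ?_, ?_⟩
    · rw [Set.mem_ofPred_eq, ← sum_map_toMultiset, Multiset.toFinsupp_toMultiset, hA, P.parts_sum]
    · rw [← sum_map_toMultiset, Multiset.toFinsupp_toMultiset, ← hA, Multiset.map_map]
      rfl
  · rintro ⟨a, rfl, rfl⟩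
    have parts_mem (j : ℕ) (hj : j ∈ (toMultiset a).map ((↑) : S → ℕ)) : j ∈ S := by
      obtain ⟨i, -, rfl⟩ := Multiset.mem_map.1 hj
      exact i.2
    have parts_pos {j : ℕ} (hj : j ∈ (toMultiset a).map ((↑) : S → ℕ)) : 0 < j :=
      Nat.pos_of_ne_zero fun hj0 => hS (hj0 ▸ parts_mem j hj)
    refine ⟨⟨(toMultiset a).map (↑), parts_pos, sum_map_toMultiset _ a⟩, parts_mem, ?_⟩
    exact (congrArg Multiset.sum (Multiset.map_map ..)).trans (sum_map_toMultiset _ a)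

end Partitions

theorem MS_eventually_quasipolynomial_general {M : Type*} [CommMonoid M] (u : ℕ → M)
    (S : Finset ℕ) (hpos : ∀ j ∈ S, 0 < j) :
    IsEventuallyQuasipolynomial (S.lcm id) fun n =>
      ({x | ∃ P : n.Partition, (∀ j ∈ P.parts, j ∈ S) ∧ (P.parts.map u).prod = x}.ncard : ℚ) := by
  have zero_notMem : 0 ∉ (S : Set ℕ) := fun h => (hpos 0 h).false
  have weight_ne_zero (i : (S : Set ℕ)) : (i : ℕ) ≠ 0 := (hpos i i.2).ne'
  have weight_dvd (i : (S : Set ℕ)) : (i : ℕ) ∣ S.lcm id := Finset.dvd_lcm (f := id) i.2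
  have lcm_ne_zero : S.lcm id ≠ 0 := by simpa [Finset.lcm_eq_zero_iff] using zero_notMem
  have quasipolynomial := isEventuallyQuasipolynomial_ncard_image_weight_fiber ℚ weight_ne_zero
    lcm_ne_zero weight_dvd (weight fun i : (S : Set ℕ) => Additive.ofMul (u i))
  simp_rw [← partition_sums_eq_image_weight zero_notMem fun j => Additive.ofMul (u j)]
    at quasipolynomial
  -- Sums in `Additive M` are definitionally products in `M`.
  exact quasipolynomial

/-- For a finite nonempty set `S` of positive integers with `d = lcm S`, the sequence `M_S(n)`
is eventually a quasipolynomial with period `d`: there are `n₀` and rational polynomials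
`f_0, …, f_{d−1}` with `M_S(n) = f_{n mod d}(n)` for all `n ≥ n₀`. -/
theorem MS_eventually_quasipolynomial (S : Finset ℕ) (hne : S.Nonempty)
    (hpos : ∀ j ∈ S, 0 < j) :
    ∃ (n₀ : ℕ) (f : ℕ → Polynomial ℚ),
      ∀ n : ℕ, n₀ ≤ n → (MS (↑S : Set ℕ) n : ℚ) = (f (n % S.lcm id)).eval (n : ℚ) :=
  MS_eventually_quasipolynomial_general Nat.factorial S hpos
end
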